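/- For every even integer n ≥ 0, if the Kasteleyn matrix K_n, regarded as a matrix over ℚ, is invertible, then K_n⁻¹((2n,2n), b_n) = −1. -/

import Mathlib

open Finset

/-- Membership predicate for the vertex set `V_n` of the TSSCPP graph `G_n`:
`0 ≤ x₁ ≤ 2n`, `x₁ ≤ x₂ ≤ 2n+1`, with `(2n,2n+1)` removed when `n` is odd. -/
def memV (n : ℕ) (x : ℤ × ℤ) : Prop :=
  0 ≤ x.1 ∧ x.1 ≤ 2*(n:ℤ) ∧ x.1 ≤ x.2 ∧ x.2 ≤ 2*(n:ℤ)+1 ∧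
    ¬(n % 2 = 1 ∧ x.1 = 2*(n:ℤ) ∧ x.2 = 2*(n:ℤ)+1)

instance memV.decPred (n : ℕ) : DecidablePred (memV n) := fun x => by
  unfold memV; infer_instance

/-- The vertex set `V_n` as a finite set. -/
noncomputable def Vfin (n : ℕ) : Finset (ℤ × ℤ) :=
  (Finset.Icc (0:ℤ) (2*(n:ℤ)) ×ˢ Finset.Icc (0:ℤ) (2*(n:ℤ)+1)).filter (memV n)

/-- The vertex set `V_n` as a set. -/
def Vset (n : ℕ) : Set (ℤ × ℤ) := {x | memV n x}

/-- The distinguished vertex `b_n = (2n, 2n+1-(n mod 2))`. -/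
def bvertex (n : ℕ) : ℤ × ℤ := (2*(n:ℤ), 2*(n:ℤ)+1 - ((n % 2 : ℕ) : ℤ))

/-- Edge relation (with `x` the "lower-left" endpoint) of the TSSCPP graph `G_n`:
horizontal edges `((x₁,x₂),(x₁+1,x₂))` for `0 ≤ x₁ ≤ 2n−1`, `x₁ ≤ x₂ ≤ 2n+1`, `x₁+x₂` odd;
vertical edges `((x₁,x₂),(x₁,x₂+1))` for `0 ≤ x₁ ≤ 2n` (`2n−1` when `n` odd), `x₁ ≤ x₂ ≤ 2n`;
diagonal edges `((x₁,x₁),(x₁+1,x₁+1))` for `0 ≤ x₁ ≤ 2n−1`. -/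
def edgeRel (n : ℕ) (x y : ℤ × ℤ) : Prop :=
  (y.1 = x.1 + 1 ∧ y.2 = x.2 ∧ 0 ≤ x.1 ∧ x.1 ≤ 2*(n:ℤ) - 1 ∧ x.1 ≤ x.2 ∧
      x.2 ≤ 2*(n:ℤ)+1 ∧ Odd (x.1 + x.2)) ∨
  (y.1 = x.1 ∧ y.2 = x.2 + 1 ∧ 0 ≤ x.1 ∧ x.1 ≤ 2*(n:ℤ) - ((n % 2 : ℕ) : ℤ) ∧
      x.1 ≤ x.2 ∧ x.2 ≤ 2*(n:ℤ)) ∨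
  (x.1 = x.2 ∧ y.1 = x.1 + 1 ∧ y.2 = x.2 + 1 ∧ 0 ≤ x.1 ∧ x.1 ≤ 2*(n:ℤ) - 1)

/-- The TSSCPP graph `G_n` (as a graph on all of `ℤ × ℤ`; all of its edges join
vertices of `V_n`). -/
def Gph (n : ℕ) : SimpleGraph (ℤ × ℤ) where
  Adj x y := edgeRel n x y ∨ edgeRel n y x
  symm := ⟨fun x y h => Or.symm h⟩
  loopless := by
    refine ⟨?_⟩
    rintro ⟨x1, x2⟩ (h | h) <;>
      rcases h with ⟨h1, h2, -⟩ | ⟨h1, h2, -⟩ | ⟨h0, h1, h2, -⟩ <;> omega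

/-- `Zpm n U` = number of perfect matchings of the subgraph of `G_n` induced on `V_n \ U`. -/
noncomputable def Zpm (n : ℕ) (U : Set (ℤ × ℤ)) : ℕ :=
  Nat.card {M : ((Gph n).induce (Vset n \ U)).Subgraph // M.IsPerfectMatching}

/-- The entry function `k(x,y)` of the Kasteleyn matrix. -/
def kfun (x y : ℤ × ℤ) : ℚ :=
  if ((x.1 + x.2) % 2 = 0 ∧ x.2 = y.2 ∧ x.1 - y.1 = 1) ∨
     ((x.1 + x.2) % 2 = 0 ∧ x.1 = y.1 ∧ (y.2 - x.2 = 1 ∨ x.2 - y.2 = 1)) ∨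
     (x.1 = x.2 ∧ y.1 = y.2 ∧ y.1 = x.1 - 1)
  then 1 else 0

/-- The Kasteleyn matrix `K_n` of `G_n` over `ℚ`, rows and columns indexed by `V_n`. -/
def Kmat (n : ℕ) : Matrix ↥(Vfin n) ↥(Vfin n) ℚ :=
  fun x y => kfun x.val y.val - kfun y.val x.val

/-! For even `n` the vertex `b_n = (2n, 2n+1)` is a leaf of `G_n` attached to `(2n, 2n)`, so its row
in `K_n` is minus the indicator of `(2n, 2n)`. Reading the row `b_n` of `K_n * K_n⁻¹ = 1` then gives
the whole row `(2n, 2n)` of `K_n⁻¹`. -/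

theorem smul_row_eq_single_of_mul_eq_one {l m R : Type*} [Fintype m] [DecidableEq l]
    [DecidableEq m] [NonAssocSemiring R] {A : Matrix l m R} {B : Matrix m l R} (hAB : A * B = 1)
    {i : l} {j : m} {c : R} (hrow : A.row i = Pi.single j c) :
    c • B.row j = Pi.single i 1 :=
  calc c • B.row j = Matrix.vecMul (A.row i) B := by rw [hrow, Matrix.single_vecMul]
    _ = (A * B).row i := rfl
    _ = Pi.single i 1 := by ext k; rw [hAB, Matrix.row_apply, Matrix.one_eq_pi_single]

theorem mem_Vfin {n : ℕ} {x : ℤ × ℤ} : x ∈ Vfin n ↔ memV n x := by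
  simp only [Vfin, mem_filter, mem_product, mem_Icc, and_iff_right_iff_imp, memV]
  omega

theorem bvertex_of_even {n : ℕ} (hn : Even n) : bvertex n = (2 * (n : ℤ), 2 * (n : ℤ) + 1) := by
  simp [bvertex, Nat.even_iff.mp hn]

theorem kfun_eq_zero_of_odd {x : ℤ × ℤ} (hx : Odd (x.1 + x.2)) (y : ℤ × ℤ) : kfun x y = 0 := by
  rw [Int.odd_iff] at hx
  exact if_neg (by omega)

theorem kfun_of_odd_right {y : ℤ × ℤ} (hy : Odd (y.1 + y.2)) (x : ℤ × ℤ) :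
    kfun x y =
      if x = (y.1 + 1, y.2) ∨ x = (y.1, y.2 - 1) ∨ x = (y.1, y.2 + 1) then 1 else 0 := by
  rw [Int.odd_iff] at hy
  refine if_congr ?_ rfl rfl
  simp only [Prod.ext_iff]
  omega

theorem Kmat_row_bvertex {n : ℕ} (hn : Even n) (hx : (2 * (n : ℤ), 2 * (n : ℤ)) ∈ Vfin n)
    (hb : bvertex n ∈ Vfin n) :
    (Kmat n).row ⟨bvertex n, hb⟩ = Pi.single ⟨(2 * (n : ℤ), 2 * (n : ℤ)), hx⟩ (-1) := by
  ext ⟨z, hz⟩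
  have hodd : Odd ((bvertex n).1 + (bvertex n).2) := by
    rw [bvertex_of_even hn]
    exact ⟨2 * n, by ring⟩
  have hneighbour : (z = ((bvertex n).1 + 1, (bvertex n).2) ∨
      z = ((bvertex n).1, (bvertex n).2 - 1) ∨ z = ((bvertex n).1, (bvertex n).2 + 1)) ↔
      z = (2 * (n : ℤ), 2 * (n : ℤ)) := by
    obtain ⟨-, hz₁, -, hz₂, -⟩ := mem_Vfin.mp hz
    simp only [bvertex_of_even hn, Prod.ext_iff]
    omega
  simp only [Matrix.row_apply, Kmat, kfun_eq_zero_of_odd hodd, kfun_of_odd_right hodd, hneighbour,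
    Pi.single_apply, Subtype.mk.injEq]
  split_ifs <;> norm_num

/-- For every even `n ≥ 0`, if the Kasteleyn matrix `K_n` over `ℚ` is invertible, then
`K_n⁻¹((2n,2n), b_n) = −1`. -/
theorem Kinv_corner (n : ℕ) (hne : Even n) (hdet : IsUnit (Kmat n).det)
    (hx : ((2*(n:ℤ), 2*(n:ℤ))) ∈ Vfin n) (hb : bvertex n ∈ Vfin n) :
    (Kmat n)⁻¹ ⟨(2*(n:ℤ), 2*(n:ℤ)), hx⟩ ⟨bvertex n, hb⟩ = -1 := by
  have hrow := smul_row_eq_single_of_mul_eq_one ((Kmat n).mul_nonsing_inv hdet)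
    (Kmat_row_bvertex hne hx hb)
  have hentry := congrFun hrow ⟨bvertex n, hb⟩
  simpa [neg_eq_iff_eq_neg] using hentry
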